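/- Let X be a set and S : X × X → X × X a bijection satisfying the braid equation, and let n ≥ 2. For each pair of distinct indices i, j ∈ {1, …, n} let S_{ij} : Xⁿ → Xⁿ be the bijection applying S to the coordinates in positions (i, j) (in that order) and the identity elsewhere. Then the assignment x_{ij} ↦ S_{ij} defines a group homomorphism φₙ^S : Hₙ → Sym(Xⁿ); equivalently, the permutations S_{ij} satisfy S_{ij} ∘ S_{kl} = S_{kl} ∘ S_{ij} whenever i, j, k, l are pairwise distinct, and S_{ik} ∘ S_{kj} ∘ S_{ik} = S_{kj} ∘ S_{ik} ∘ S_{kj} for pairwise distinct i, j, k. -/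

import Mathlib

/-- Lift of a map on the factors (1,2) of a triple product. -/
def lift12 {X Y Z : Type*} (T : X × Y → X × Y) : X × Y × Z → X × Y × Z :=
  fun (x, y, z) => ((T (x, y)).1, (T (x, y)).2, z)

/-- Lift of a map on the factors (2,3) of a triple product. -/
def lift23 {X Y Z : Type*} (T : Y × Z → Y × Z) : X × Y × Z → X × Y × Z :=
  fun (x, y, z) => (x, (T (y, z)).1, (T (y, z)).2)

/-- `S` satisfies the braid equation. -/
def IsBraid {X : Type*} (S : X × X → X × X) : Prop :=
  lift12 (X := X) (Y := X) (Z := X) S ∘ lift23 S ∘ lift12 S =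
    lift23 (X := X) (Y := X) (Z := X) S ∘ lift12 S ∘ lift23 S

/-- `act S i j` applies `S` to the coordinates in positions `(i, j)` (in that order)
and the identity to all other coordinates of `Xⁿ`. -/
def act {X : Type*} {n : ℕ} (S : X × X → X × X) (i j : Fin n) (f : Fin n → X) :
    Fin n → X :=
  Function.update (Function.update f i (S (f i, f j)).1) j (S (f i, f j)).2

/-- If `S : X × X → X × X` is a bijection satisfying the braid equation and `n ≥ 2`,
then the maps `S_{ij} : Xⁿ → Xⁿ` satisfy the defining relations of the group `Hₙ`:
`S_{ij} ∘ S_{kl} = S_{kl} ∘ S_{ij}` for pairwise distinct `i, j, k, l`, and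
`S_{ik} ∘ S_{kj} ∘ S_{ik} = S_{kj} ∘ S_{ik} ∘ S_{kj}` for pairwise distinct `i, j, k`;
hence `x_{ij} ↦ S_{ij}` defines a group homomorphism `Hₙ → Sym(Xⁿ)`. -/
theorem hn_representation {X : Type*} (n : ℕ) (hn : 2 ≤ n) (S : X × X → X × X)
    (hbij : Function.Bijective S) (hBr : IsBraid S) :
    (∀ i j k l : Fin n, i ≠ j → i ≠ k → i ≠ l → j ≠ k → j ≠ l → k ≠ l →
      act S i j ∘ act S k l = act S k l ∘ act S i j) ∧
    (∀ i j k : Fin n, i ≠ j → i ≠ k → j ≠ k →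
      act S i k ∘ act S k j ∘ act S i k = act S k j ∘ act S i k ∘ act S k j) := by
  refine ⟨fun i j k l hij hik hil hjk hjl hkl => ?_, fun i j k hij hik hjk => ?_⟩
  · funext f m
    simp only [act, Function.comp_apply, Function.update_apply]
    grind
  · funext f
    have h := congrFun hBr (f i, f k, f j)
    simp only [lift12, lift23, Function.comp_apply, Prod.mk.injEq] at h
    obtain ⟨h₁, h₂, h₃⟩ := h
    funext m
    simp only [act, Function.comp_apply, Function.update_apply]
    grind
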